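/- Let f be a real polynomial of degree n ≥ 2 all of whose complex roots are real, such that for each j ∈ {1, ..., n-1} there exists z_j with f(z_j) = 0 and f^{(j)}(z_j) = 0. If f is not trivial, i.e. not of the form a(X - b)^n, then f has at least five distinct roots. -/

import Mathlib

open Polynomial

/-!
Let `f` have degree `n` and only real roots. Laguerre's inequality `0 ≤ f' ^ 2 - f * f''` shows that
two consecutive derivatives of `f` can only vanish together at a multiple root of `f`, and the
logarithmic derivative `∑ 1 / (x - r)` shows that at an extreme root of `f` the `j`-th derivative
vanishes only if the multiplicity exceeds `j`. So if there are at most four roots, there are exactly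
four: the extreme ones `a` and `d`, an inner root `z` common to `f` and `f^(n-1)`, and an inner root
`b` common to `f` and `f^(n-2)`. The root shared with `f^(n-3)` must again be `z`.

The condition `f^(n-k)(x) = 0` says that the `k`-th elementary symmetric function of the differences
`x - r` vanishes, which Newton's identities turn into relations between their power sums. If
`f^(n-4)` vanishes at `b`, set `t = b - z`: the values of `∑ v ^ 2` and `∑ v ^ 4` over the
differences `v = z - r` are then forced, and they make `∑ (v ^ 2 - n t ^ 2) ^ 2` too small to be a
sum of squares. If it vanishes at `a` or `d`, that root has multiplicity `n - 3`, and
`∑ v = ∑ v ^ 3 = 0` forces two of the remaining roots to coincide.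
-/

section PowerSum

variable {R : Type*} [CommRing R]

/-- The power sum `∑ x ^ k` over the elements `x` of a multiset, counted with multiplicity. -/
def powerSum (s : Multiset R) (k : ℕ) : R :=
  (s.map (· ^ k)).sum

lemma powerSum_zero (s : Multiset R) : powerSum s 0 = s.card := by
  simp [powerSum]

lemma powerSum_map_const_add (t : R) (s : Multiset R) (k : ℕ) :
    powerSum (s.map (t + ·)) k =
      ∑ i ∈ Finset.range (k + 1), t ^ i * powerSum s (k - i) * k.choose i := by
  simp only [powerSum, Multiset.map_map, Function.comp_def, add_pow, Multiset.sum_map_sum_map,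
    Multiset.sum_map_mul_right, Multiset.sum_map_mul_left, Finset.sum]

lemma aeval_psum_eq_powerSum {σ : Type*} [Fintype σ] (x : σ → R) (k : ℕ) :
    MvPolynomial.aeval x (MvPolynomial.psum σ R k) = powerSum (Finset.univ.val.map x) k := by
  simp only [MvPolynomial.psum, map_sum, map_pow, MvPolynomial.aeval_X, powerSum, Multiset.map_map,
    Function.comp_def, Finset.sum_map_val]

lemma mul_esymm_eq_sum_powerSum (s : Multiset R) (k : ℕ) :
    k * s.esymm k = (-1) ^ (k + 1) *
      ∑ i ∈ Finset.range k, (-1) ^ i * s.esymm i * powerSum s (k - i) := by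
  obtain ⟨l, rfl⟩ := Quot.exists_rep s
  have hl : (Finset.univ : Finset (Fin l.length)).val.map l.get = Quot.mk _ l := by
    simp [Fin.univ_val_map]
  have newton := congr_arg (MvPolynomial.aeval l.get)
    (MvPolynomial.mul_esymm_eq_sum (Fin l.length) R k)
  simp only [map_mul, map_sum, map_pow, map_neg, map_one, map_natCast, aeval_psum_eq_powerSum,
    MvPolynomial.aeval_esymm_eq_multiset_esymm, hl] at newton
  rw [newton, Finset.sum_filter, Finset.Nat.sum_antidiagonal_eq_sum_range_succ_mk,
    Finset.sum_range_succ, if_neg (lt_irrefl _), add_zero]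
  congr 1
  exact Finset.sum_congr rfl fun i hi ↦ if_pos (Finset.mem_range.1 hi)

lemma esymm_zero (s : Multiset R) : s.esymm 0 = 1 := by
  simp [Multiset.esymm]

lemma powerSum_eq_zero_of_esymm_eq_zero {s : Multiset R} (h₁ : s.esymm 1 = 0)
    (h₃ : s.esymm 3 = 0) : powerSum s 1 = 0 ∧ powerSum s 3 = 0 := by
  have newton₁ := mul_esymm_eq_sum_powerSum s 1
  have newton₃ := mul_esymm_eq_sum_powerSum s 3
  simp only [Finset.sum_range_succ, Finset.sum_range_zero, esymm_zero, h₁, h₃, Nat.reduceSub]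
    at newton₁ newton₃
  have p₁ : powerSum s 1 = 0 := by linear_combination -newton₁
  exact ⟨p₁, by linear_combination -newton₃ - s.esymm 2 * p₁⟩

lemma powerSum_relations_of_esymm_eq_zero {s : Multiset R} (h₂ : s.esymm 2 = 0)
    (h₄ : s.esymm 4 = 0) : powerSum s 2 = powerSum s 1 ^ 2 ∧
      3 * powerSum s 4 = 4 * powerSum s 1 * powerSum s 3 - powerSum s 1 ^ 4 := by
  have newton₁ := mul_esymm_eq_sum_powerSum s 1
  have newton₂ := mul_esymm_eq_sum_powerSum s 2
  have newton₃ := mul_esymm_eq_sum_powerSum s 3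
  have newton₄ := mul_esymm_eq_sum_powerSum s 4
  simp only [Finset.sum_range_succ, Finset.sum_range_zero, esymm_zero, h₂, h₄, Nat.reduceSub,
    Nat.cast_ofNat, Nat.cast_one] at newton₁ newton₂ newton₃ newton₄
  have p₂ : powerSum s 2 = powerSum s 1 ^ 2 := by
    linear_combination newton₂ + powerSum s 1 * newton₁
  exact ⟨p₂, by linear_combination 3 * newton₄ + powerSum s 1 * newton₃ +
    (3 * powerSum s 3 - powerSum s 1 * powerSum s 2) * newton₁ - powerSum s 1 ^ 2 * p₂⟩

lemma powerSum_eq_of_esymm_eq_zero {s : Multiset R} {t : R} (h₁ : s.esymm 1 = 0)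
    (h₃ : s.esymm 3 = 0) (h₂ : (s.map (t + ·)).esymm 2 = 0) (h₄ : (s.map (t + ·)).esymm 4 = 0) :
    powerSum s 2 = s.card * (s.card - 1) * t ^ 2 ∧
      3 * powerSum s 4 = s.card * (s.card - 1) * (-s.card ^ 2 + 11 * s.card - 15) * t ^ 4 := by
  obtain ⟨p₁, p₃⟩ := powerSum_eq_zero_of_esymm_eq_zero h₁ h₃
  obtain ⟨q₂, q₄⟩ := powerSum_relations_of_esymm_eq_zero h₂ h₄
  simp only [powerSum_map_const_add, Finset.sum_range_succ, Finset.sum_range_zero,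
    Nat.choose, Nat.reduceSub, Nat.reduceAdd, powerSum_zero, p₁, p₃] at q₂ q₄
  have p₂ : powerSum s 2 = s.card * (s.card - 1) * t ^ 2 := by linear_combination q₂
  exact ⟨p₂, by linear_combination q₄ + (12 * s.card - 18) * t ^ 2 * p₂⟩

lemma sum_map_sq_sub_sq (s : Multiset R) (c : R) :
    (s.map fun x ↦ (x ^ 2 - c) ^ 2).sum =
      powerSum s 4 - 2 * c * powerSum s 2 + c ^ 2 * s.card := by
  rw [← powerSum_zero]
  simp only [powerSum, ← Multiset.sum_map_mul_left, ← Multiset.sum_map_sub, ← Multiset.sum_map_add]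
  congr! 2
  ring

end PowerSum

section LinearOrderedField

variable {K : Type*} [Field K] [LinearOrder K] [IsStrictOrderedRing K]

lemma eq_zero_of_esymm_eq_zero {s : Multiset K} {t : K} (hcard : 5 ≤ s.card) (hzero : 0 ∈ s)
    (hneg : -t ∈ s) (h₁ : s.esymm 1 = 0) (h₃ : s.esymm 3 = 0)
    (h₂ : (s.map (t + ·)).esymm 2 = 0) (h₄ : (s.map (t + ·)).esymm 4 = 0) : t = 0 := by
  by_contra ht
  obtain ⟨p₂, p₄⟩ := powerSum_eq_of_esymm_eq_zero h₁ h₃ h₂ h₄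
  have hcard' : (5 : K) ≤ s.card := by exact_mod_cast hcard
  have hsum := sum_map_sq_sub_sq s (s.card * t ^ 2)
  generalize (s.card : K) = n at *
  obtain ⟨w, rfl⟩ := Multiset.exists_cons_of_mem hzero
  obtain ⟨u, rfl⟩ := Multiset.exists_cons_of_mem
    ((Multiset.mem_cons.1 hneg).resolve_left (neg_ne_zero.2 ht))
  have hu : 0 ≤ (u.map fun x ↦ (x ^ 2 - n * t ^ 2) ^ 2).sum :=
    Multiset.sum_nonneg (by simpa using fun x _ ↦ sq_nonneg (x ^ 2 - n * t ^ 2))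
  simp only [Multiset.map_cons, Multiset.sum_cons] at hsum
  have hrest : 3 * ((n - 1) ^ 2 * t ^ 4 + (u.map fun x ↦ (x ^ 2 - n * t ^ 2) ^ 2).sum) =
      -(n * (n - 1) * (n - 3) * (n - 5) * t ^ 4) := by
    linear_combination 3 * hsum + p₄ - 6 * n * t ^ 2 * p₂
  have hpos : 0 < (n - 1) ^ 2 * t ^ 4 :=
    mul_pos (pow_pos (by linarith) 2) (by positivity)
  have hnonneg : 0 ≤ n * (n - 1) * (n - 3) * (n - 5) * t ^ 4 := by
    have hn₁ : 0 ≤ n * (n - 1) := mul_nonneg (by linarith) (by linarith)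
    have hn₃ : 0 ≤ (n - 3) * (n - 5) := mul_nonneg (by linarith) (by linarith)
    calc
      0 ≤ n * (n - 1) * ((n - 3) * (n - 5)) * t ^ 4 := by positivity
      _ = n * (n - 1) * (n - 3) * (n - 5) * t ^ 4 := by ring
  linarith

lemma eq_of_natCast_mul_add_add_eq_zero {m : ℕ} {a b c : K} (hm : 2 ≤ m) (ha : a ≠ 0)
    (h₁ : m * a + b + c = 0) (h₃ : m * a ^ 3 + b ^ 3 + c ^ 3 = 0) : b = c := by
  have hm' : (2 : K) ≤ m := by exact_mod_cast hm
  have hbc : b + c ≠ 0 := by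
    rw [show b + c = -(m * a) by linear_combination h₁]
    simp [ha, Nat.ne_of_gt (by lia : 0 < m)]
  have hsq : a ^ 2 = b ^ 2 - b * c + c ^ 2 :=
    mul_left_cancel₀ hbc (by linear_combination a ^ 2 * h₁ - h₃)
  have hdiff : 3 * (b - c) ^ 2 = -(a ^ 2 * (m ^ 2 - 4)) := by
    linear_combination -4 * hsq + (m * a - b - c) * h₁
  have hnonneg : 0 ≤ a ^ 2 * ((m : K) ^ 2 - 4) :=
    mul_nonneg (sq_nonneg a) (by nlinarith)
  exact sub_eq_zero.1 (pow_eq_zero_iff two_ne_zero |>.1 (by nlinarith [sq_nonneg (b - c)]))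

end LinearOrderedField

section Taylor

variable {R : Type*} [CommRing R] [IsDomain R] {f : R[X]}

lemma taylor_eq_of_splits (hf : f.Splits) (x : R) :
    taylor x f = C f.leadingCoeff * (f.roots.map fun r ↦ X + C (x - r)).prod := by
  conv_lhs => rw [hf.eq_prod_roots]
  rw [taylor_mul, taylor_C, ← taylorAlgHom_apply, map_multiset_prod, Multiset.map_map]
  simp [add_sub_assoc]

lemma esymm_map_sub_roots_eq_zero [CharZero R] (hf : f.Splits) (hf0 : f ≠ 0) {j k : ℕ} {x : R}
    (hdeg : f.natDegree = j + k) (hx : (derivative^[j] f).IsRoot x) :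
    (f.roots.map (x - ·)).esymm k = 0 := by
  have hcard := hf.natDegree_eq_card_roots
  have hcoeff : (hasseDeriv j f).eval x = f.leadingCoeff * (f.roots.map (x - ·)).esymm k := by
    rw [← taylor_coeff, taylor_eq_of_splits hf, coeff_C_mul,
      Multiset.prod_X_add_C_coeff' _ _ (by lia), ← hcard, hdeg, Nat.add_sub_cancel_left]
  rw [IsRoot, ← factorial_smul_hasseDeriv] at hx
  simpa [hcoeff, Nat.factorial_ne_zero, hf0] using hx

end Taylor

section Multiplicity

variable {R : Type*} [CommRing R] [IsDomain R] {f : R[X]} {x : R}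

lemma rootMultiplicity_lt_natDegree (hf : ∀ a b : R, f ≠ C a * (X - C b) ^ f.natDegree) (x : R) :
    f.rootMultiplicity x < f.natDegree := by
  by_contra! hle
  have hdvd : (X - C x) ^ f.natDegree ∣ f :=
    (pow_dvd_pow _ hle).trans (pow_rootMultiplicity_dvd f x)
  refine hf f.leadingCoeff x (eq_leadingCoeff_mul_of_monic_of_dvd_of_natDegree_le
    ((monic_X_sub_C x).pow _) hdvd ?_)
  simp

lemma rootMultiplicity_add_card_le [DecidableEq R] (hf : f ≠ 0) (hx : f.IsRoot x) :
    f.rootMultiplicity x + f.roots.toFinset.card ≤ f.natDegree + 1 := by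
  have hmem : x ∈ f.roots.toFinset := by simp [hf, hx.eq_zero]
  have hrest : (f.roots.toFinset.erase x).card ≤
      ∑ y ∈ f.roots.toFinset.erase x, f.roots.count y := by
    rw [Finset.card_eq_sum_ones]
    exact Finset.sum_le_sum fun y hy ↦
      Multiset.one_le_count_iff_mem.2 (Multiset.mem_toFinset.1 (Finset.mem_of_mem_erase hy))
  have hsum := Finset.add_sum_erase f.roots.toFinset (f.roots.count ·) hmem
  rw [Multiset.toFinset_sum_count_eq, count_roots] at hsum
  have hcard := Finset.card_erase_add_one hmem
  have := card_roots' f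
  lia

lemma roots_eq_replicate_add {s : Multiset R} {m : ℕ} (hdeg : f.natDegree = m + s.card)
    (hf : f ≠ 0) (hx : m ≤ f.rootMultiplicity x) (hxs : x ∉ s) (hs : s.Nodup)
    (hroots : ∀ y ∈ s, f.IsRoot y) : f.roots = Multiset.replicate m x + s := by
  classical
  have hdisj : Disjoint (Multiset.replicate m x) s :=
    Multiset.disjoint_left.2 fun hy hys ↦ hxs (by rwa [← Multiset.eq_of_mem_replicate hy])
  have hle : Multiset.replicate m x + s ≤ f.roots := by
    rw [Multiset.add_eq_union_iff_disjoint.2 hdisj]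
    refine Multiset.union_le ?_ ((Multiset.le_iff_subset hs).2 fun y hy ↦ ?_)
    · rwa [← Multiset.le_count_iff_replicate_le, count_roots]
    · exact (mem_roots hf).2 (hroots y hy)
  refine (Multiset.eq_of_le_of_card_le hle ?_).symm
  simpa [hdeg] using card_roots' f

end Multiplicity

section Laguerre

variable {R : Type*} [CommRing R]

/-- The Laguerre expression `f' ^ 2 - f * f''`, which is nonnegative for split polynomials over an
ordered field. -/
noncomputable def laguerre (f : R[X]) : R[X] :=
  derivative f ^ 2 - f * derivative (derivative f)

lemma laguerre_C (a : R) : laguerre (C a) = 0 := by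
  simp [laguerre]

lemma laguerre_X_add_C (a : R) : laguerre (X + C a) = 1 := by
  simp [laguerre]

lemma laguerre_mul (f g : R[X]) :
    laguerre (f * g) = g ^ 2 * laguerre f + f ^ 2 * laguerre g := by
  simp only [laguerre, derivative_mul, derivative_add]
  ring

end Laguerre

section LinearOrderedField

variable {K : Type*} [Field K] [LinearOrder K] [IsStrictOrderedRing K] {f : K[X]} {x : K}

lemma eval_laguerre_nonneg (hf : f.Splits) (x : K) : 0 ≤ (laguerre f).eval x := by
  induction hf using Submonoid.closure_induction with
  | mem g hg =>
    rcases hg with ⟨a, rfl⟩ | ⟨a, rfl⟩ <;> simp [laguerre_C, laguerre_X_add_C]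
  | one => simp [laguerre]
  | mul g h _ _ ihg ihh =>
    simp only [laguerre_mul, eval_add, eval_mul, eval_pow]
    positivity

lemma eval_laguerre_pos (hf : f.Splits) (hdeg : f.natDegree ≠ 0) (hx : f.eval x ≠ 0) :
    0 < (laguerre f).eval x := by
  induction hf using Submonoid.closure_induction with
  | mem g hg =>
    rcases hg with ⟨a, rfl⟩ | ⟨a, rfl⟩
    · simp at hdeg
    · simp [laguerre_X_add_C]
  | one => simp at hdeg
  | mul g h hg hh ihg ihh =>
    have hgx : g.eval x ≠ 0 := fun h0 ↦ hx (by simp [h0])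
    have hhx : h.eval x ≠ 0 := fun h0 ↦ hx (by simp [h0])
    have hg0 := eval_laguerre_nonneg hg x
    have hh0 := eval_laguerre_nonneg hh x
    simp only [laguerre_mul, eval_add, eval_mul, eval_pow]
    by_cases hgdeg : g.natDegree = 0
    · have hhdeg : h.natDegree ≠ 0 := by
        have := natDegree_mul_le (p := g) (q := h)
        lia
      exact add_pos_of_nonneg_of_pos (by positivity) (mul_pos (by positivity) (ihh hhdeg hhx))
    · exact add_pos_of_pos_of_nonneg (mul_pos (by positivity) (ihg hgdeg hgx)) (by positivity)

lemma isRoot_of_isRoot_derivative_derivative (hf : f.Splits) (hdeg : f.natDegree ≠ 0)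
    (h₁ : (derivative f).IsRoot x) (h₂ : (derivative (derivative f)).IsRoot x) : f.IsRoot x := by
  by_contra hx
  simpa [laguerre, h₁.eq_zero, h₂.eq_zero] using eval_laguerre_pos hf hdeg hx

-- Beyond the roots all terms of the logarithmic derivative `∑ 1 / (x - r)` have the same sign.
lemma isRoot_of_isRoot_derivative_of_mem_bounds (hf : f.Splits) (hdeg : f.natDegree ≠ 0)
    (hx : x ∈ lowerBounds {r | f.IsRoot r} ∪ upperBounds {r | f.IsRoot r})
    (h : (derivative f).IsRoot x) : f.IsRoot x := by
  by_contra hfx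
  have hroots : f.roots ≠ 0 := by
    rw [← Multiset.card_pos, splits_iff_card_roots.1 hf]
    lia
  have hne : ∀ r ∈ f.roots, r ≠ x := fun r hr hrx ↦ hfx (hrx ▸ isRoot_of_mem_roots hr)
  have hsum : (f.roots.map fun r ↦ 1 / (x - r)).sum = 0 := by
    rw [IsRoot, hf.eval_derivative_eq_eval_mul_sum hfx] at h
    exact (mul_eq_zero.1 h).resolve_left hfx
  rcases hx with hx | hx
  · have := Multiset.sum_lt_sum_of_nonempty (f := fun r ↦ 1 / (x - r)) (g := fun _ ↦ 0) hroots
      fun r hr ↦ one_div_neg.2 <|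
        sub_neg.2 ((hx (isRoot_of_mem_roots hr)).lt_of_ne (hne r hr).symm)
    simp only [hsum, Multiset.map_const', Multiset.sum_replicate, smul_zero,
      lt_self_iff_false] at this
  · have := Multiset.sum_lt_sum_of_nonempty (f := fun _ ↦ 0) (g := fun r ↦ 1 / (x - r)) hroots
      fun r hr ↦ one_div_pos.2 <|
        sub_pos.2 ((hx (isRoot_of_mem_roots hr)).lt_of_ne (hne r hr))
    simp only [hsum, Multiset.map_const', Multiset.sum_replicate, smul_zero,
      lt_self_iff_false] at this

lemma mem_bounds_derivative (hf : f.Splits) (hdeg : f.natDegree ≠ 0)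
    (hx : x ∈ lowerBounds {r | f.IsRoot r} ∪ upperBounds {r | f.IsRoot r}) :
    x ∈ lowerBounds {r | (derivative f).IsRoot r} ∪ upperBounds {r | (derivative f).IsRoot r} := by
  refine hx.imp (fun hx y hy ↦ ?_) (fun hx y hy ↦ ?_) <;> by_contra! hyx
  · have hy' : y ∈ lowerBounds {r | f.IsRoot r} := fun r hr ↦ hyx.le.trans (hx hr)
    exact hyx.not_ge (hx (isRoot_of_isRoot_derivative_of_mem_bounds hf hdeg (.inl hy') hy))
  · have hy' : y ∈ upperBounds {r | f.IsRoot r} := fun r hr ↦ (hx hr).trans hyx.le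
    exact hyx.not_ge (hx (isRoot_of_isRoot_derivative_of_mem_bounds hf hdeg (.inr hy') hy))

lemma eq_of_isRoot_alternating_iterate_derivative (hf : f.Splits) {z b : K} {m : ℕ}
    (hdeg : f.natDegree = m + 5) (hz : f.IsRoot z) (hb : f.IsRoot b)
    (hz₁ : (derivative^[m + 4] f).IsRoot z) (hb₂ : (derivative^[m + 3] f).IsRoot b)
    (hz₃ : (derivative^[m + 2] f).IsRoot z) (hb₄ : (derivative^[m + 1] f).IsRoot b) : b = z := by
  have hf0 : f ≠ 0 := ne_zero_of_natDegree_gt (n := 0) (by lia)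
  have hmap : (f.roots.map (z - ·)).map (b - z + ·) = f.roots.map (b - ·) := by simp
  refine sub_eq_zero.1 (eq_zero_of_esymm_eq_zero (s := f.roots.map (z - ·)) ?_ ?_ ?_
    (esymm_map_sub_roots_eq_zero hf hf0 hdeg hz₁)
    (esymm_map_sub_roots_eq_zero hf hf0 hdeg hz₃) ?_ ?_)
  · rw [Multiset.card_map, ← hf.natDegree_eq_card_roots, hdeg]
    lia
  · exact Multiset.mem_map.2 ⟨z, (mem_roots hf0).2 hz, sub_self z⟩
  · exact Multiset.mem_map.2 ⟨b, (mem_roots hf0).2 hb, (neg_sub b z).symm⟩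
  · rw [hmap]
    exact esymm_map_sub_roots_eq_zero hf hf0 hdeg hb₂
  · rw [hmap]
    exact esymm_map_sub_roots_eq_zero hf hf0 hdeg hb₄

lemma eq_of_le_rootMultiplicity_of_isRoot_iterate_derivative (hf : f.Splits) {r z b c : K} {m : ℕ}
    (hdeg : f.natDegree = m + 5) (hr : m + 2 ≤ f.rootMultiplicity r)
    (hz : f.IsRoot z) (hb : f.IsRoot b) (hc : f.IsRoot c) (hrz : r ≠ z) (hrb : r ≠ b) (hrc : r ≠ c)
    (hzb : z ≠ b) (hzc : z ≠ c)
    (hz₁ : (derivative^[m + 4] f).IsRoot z) (hz₃ : (derivative^[m + 2] f).IsRoot z) : b = c := by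
  have hf0 : f ≠ 0 := ne_zero_of_natDegree_gt (n := 0) (by lia)
  by_contra hbc
  have hroots : f.roots = Multiset.replicate (m + 2) r + {z, b, c} :=
    roots_eq_replicate_add (by simpa) hf0 hr (by simp [hrz, hrb, hrc]) (by simp [hzb, hzc, hbc])
      (by simp [hz.eq_zero, hb.eq_zero, hc.eq_zero])
  have hpow (k : ℕ) (hk : k ≠ 0) : powerSum (f.roots.map (z - ·)) k =
      (m + 2 : ℕ) * (z - r) ^ k + (z - b) ^ k + (z - c) ^ k := by
    simp only [powerSum, hroots, Multiset.map_add, Multiset.map_replicate, Multiset.sum_add,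
      Multiset.sum_replicate, nsmul_eq_mul, Multiset.insert_eq_cons, Multiset.map_cons,
      Multiset.map_singleton, Multiset.sum_cons, Multiset.sum_singleton, sub_self,
      zero_pow hk]
    ring
  obtain ⟨p₁, p₃⟩ := powerSum_eq_zero_of_esymm_eq_zero
    (esymm_map_sub_roots_eq_zero hf hf0 hdeg hz₁) (esymm_map_sub_roots_eq_zero hf hf0 hdeg hz₃)
  have hzbc : z - b = z - c := eq_of_natCast_mul_add_add_eq_zero le_add_self
    (sub_ne_zero.2 hrz.symm) (by simpa only [pow_one] using (hpow 1 one_ne_zero).symm.trans p₁)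
    ((hpow 3 three_ne_zero).symm.trans p₃)
  exact hbc (sub_right_injective hzbc)

end LinearOrderedField

section Real

variable {f : ℝ[X]} {x : ℝ}

lemma splits_of_forall_aeval_eq_zero_im_eq_zero
    (hf : ∀ z : ℂ, aeval z f = 0 → z.im = 0) : f.Splits := by
  refine .of_splits_map (algebraMap ℝ ℂ) (IsAlgClosed.splits _) fun z hz ↦ ?_
  rw [mem_roots', IsRoot, eval_map_algebraMap] at hz
  exact ⟨z.re, Complex.ext (by simp) (by simp [hf z hz.2])⟩

lemma splits_derivative (hf : f.Splits) : (derivative f).Splits := by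
  rw [splits_iff_card_roots] at hf ⊢
  have hrolle := card_roots_le_derivative f
  have hle := card_roots' (derivative f)
  rw [natDegree_derivative] at hle ⊢
  lia

lemma add_one_lt_rootMultiplicity_of_isRoot_iterate_derivative (hf : f.Splits) {j : ℕ}
    (hj : j < f.natDegree) (h₁ : (derivative^[j] f).IsRoot x)
    (h₂ : (derivative^[j + 1] f).IsRoot x) : j + 1 < f.rootMultiplicity x := by
  induction j generalizing f with
  | zero =>
    exact (one_lt_rootMultiplicity_iff_isRoot (ne_zero_of_natDegree_gt hj)).2 ⟨h₁, h₂⟩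
  | succ j ih =>
    have hj' : j < (derivative f).natDegree := by rw [natDegree_derivative]; lia
    have hmult := ih (splits_derivative hf) hj' h₁ h₂
    have hf' : derivative f ≠ 0 := ne_zero_of_natDegree_gt hj'
    obtain ⟨hx₁, hx₂⟩ := (one_lt_rootMultiplicity_iff_isRoot hf').1
      ((Nat.le_add_left 1 j).trans_lt hmult)
    have hx := isRoot_of_isRoot_derivative_derivative hf (by lia) hx₁ hx₂
    rw [derivative_rootMultiplicity_of_root hx] at hmult
    lia

lemma lt_rootMultiplicity_of_isRoot_iterate_derivative_of_mem_bounds (hf : f.Splits)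
    (hx : x ∈ lowerBounds {r | f.IsRoot r} ∪ upperBounds {r | f.IsRoot r})
    {j : ℕ} (hj : j < f.natDegree) (h : (derivative^[j] f).IsRoot x) :
    j < f.rootMultiplicity x := by
  induction j generalizing f with
  | zero => exact (rootMultiplicity_pos (ne_zero_of_natDegree_gt hj)).2 h
  | succ j ih =>
    have hj' : j < (derivative f).natDegree := by rw [natDegree_derivative]; lia
    have hmult := ih (splits_derivative hf) (mem_bounds_derivative hf (by lia) hx) hj' h
    have hx₁ : (derivative f).IsRoot x :=
      (rootMultiplicity_pos (ne_zero_of_natDegree_gt hj')).1 (by lia)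
    have hroot := isRoot_of_isRoot_derivative_of_mem_bounds hf (by lia) hx hx₁
    rw [derivative_rootMultiplicity_of_root hroot] at hmult
    lia

lemma exists_isLeast_and_isGreatest_isRoot (hf : f.Splits) (hdeg : f.natDegree ≠ 0) :
    ∃ a d, IsLeast {r | f.IsRoot r} a ∧ IsGreatest {r | f.IsRoot r} d := by
  have hf0 : f ≠ 0 := by rintro rfl; simp at hdeg
  have hfin : {r | f.IsRoot r}.Finite := finite_setOfPred_isRoot hf0
  have hne : {r | f.IsRoot r}.Nonempty :=
    hf.exists_eval_eq_zero (by simpa [degree_eq_natDegree hf0])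
  obtain ⟨a, ha⟩ := hfin.isCompact.exists_isLeast hne
  obtain ⟨d, hd⟩ := hfin.isCompact.exists_isGreatest hne
  exact ⟨a, d, ha, hd⟩

variable {a b d z : ℝ}

lemma mem_Ioo_of_isRoot_iterate_derivative (hf : f.Splits) (ha : IsLeast {r | f.IsRoot r} a)
    (hd : IsGreatest {r | f.IsRoot r} d) {j : ℕ} (hj : j < f.natDegree)
    (h : (derivative^[j] f).IsRoot x) (hmult : f.rootMultiplicity x ≤ j) : x ∈ Set.Ioo a d := by
  constructor <;> by_contra! hx <;> refine hmult.not_gt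
    (lt_rootMultiplicity_of_isRoot_iterate_derivative_of_mem_bounds hf ?_ hj h)
  · exact .inl fun r hr ↦ hx.trans (ha.2 hr)
  · exact .inr fun r hr ↦ (hd.2 hr).trans hx

/-- `f` has exactly four distinct real roots: the extreme ones `a` and `d`, and two inner ones `z`
and `b`, in either order. -/
structure HasExactlyFourRoots (f : ℝ[X]) (a z b d : ℝ) : Prop where
  isLeast : IsLeast {r | f.IsRoot r} a
  isGreatest : IsGreatest {r | f.IsRoot r} d
  z_mem_Ioo : z ∈ Set.Ioo a d
  b_mem_Ioo : b ∈ Set.Ioo a d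
  b_ne_z : b ≠ z
  roots_toFinset : f.roots.toFinset = {a, z, b, d}

lemma card_eq_four_of_mem_Ioo (hz : z ∈ Set.Ioo a d) (hb : b ∈ Set.Ioo a d) (hbz : b ≠ z) :
    ({a, z, b, d} : Finset ℝ).card = 4 := by
  grind

lemma hasExactlyFourRoots_of_card_roots_le_four (hf : f ≠ 0) (ha : IsLeast {r | f.IsRoot r} a)
    (hd : IsGreatest {r | f.IsRoot r} d) (hz : f.IsRoot z) (hb : f.IsRoot b)
    (hzad : z ∈ Set.Ioo a d) (hbad : b ∈ Set.Ioo a d) (hbz : b ≠ z)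
    (hcard : f.roots.toFinset.card ≤ 4) : HasExactlyFourRoots f a z b d where
  isLeast := ha
  isGreatest := hd
  z_mem_Ioo := hzad
  b_mem_Ioo := hbad
  b_ne_z := hbz
  roots_toFinset := by
    have hsub : {a, z, b, d} ⊆ f.roots.toFinset := by
      simp [Finset.insert_subset_iff, hf, ha.1.eq_zero, hz.eq_zero, hb.eq_zero, hd.1.eq_zero]
    have hcard' := card_eq_four_of_mem_Ioo hzad hbad hbz
    exact (Finset.eq_of_subset_of_card_le hsub (by lia)).symm

lemma exists_hasExactlyFourRoots (hf : f.Splits) (hmult : ∀ x, f.rootMultiplicity x < f.natDegree)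
    (hcard : f.roots.toFinset.card ≤ 4) {m : ℕ} (hdeg : f.natDegree = m + 2) (hz : f.IsRoot z)
    (hz₁ : (derivative^[m + 1] f).IsRoot z) (hb : f.IsRoot b) (hb₂ : (derivative^[m] f).IsRoot b) :
    ∃ a d, HasExactlyFourRoots f a z b d := by
  obtain ⟨a, d, ha, hd⟩ := exists_isLeast_and_isGreatest_isRoot hf (by lia)
  have hzad := mem_Ioo_of_isRoot_iterate_derivative hf ha hd (by lia) hz₁
    (by have := hmult z; lia)
  have hf0 : f ≠ 0 := ne_zero_of_natDegree_gt (n := 0) (by lia)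
  have hthree : 3 ≤ f.roots.toFinset.card := by
    rw [← Finset.card_eq_three.2 ⟨a, z, d, hzad.1.ne, (hzad.1.trans hzad.2).ne, hzad.2.ne, rfl⟩]
    refine Finset.card_le_card ?_
    simp [Finset.insert_subset_iff, hf0, ha.1.eq_zero, hz.eq_zero, hd.1.eq_zero]
  have hmultb := rootMultiplicity_add_card_le hf0 hb
  have hbad := mem_Ioo_of_isRoot_iterate_derivative hf ha hd (by lia) hb₂ (by lia)
  have hbz : b ≠ z := by
    rintro rfl
    have := add_one_lt_rootMultiplicity_of_isRoot_iterate_derivative hf (by lia) hb₂ hz₁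
    lia
  exact ⟨a, d, hasExactlyFourRoots_of_card_roots_le_four hf0 ha hd hz hb hzad hbad hbz hcard⟩

namespace HasExactlyFourRoots

lemma ne_zero (h : HasExactlyFourRoots f a z b d) : f ≠ 0 := by
  rintro rfl
  simpa using h.roots_toFinset.symm

lemma isRoot_iff (h : HasExactlyFourRoots f a z b d) :
    f.IsRoot x ↔ x = a ∨ x = z ∨ x = b ∨ x = d := by
  rw [← mem_roots h.ne_zero, ← Multiset.mem_toFinset, h.roots_toFinset]
  simp

lemma rootMultiplicity_add_three_le (h : HasExactlyFourRoots f a z b d) (hx : f.IsRoot x) :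
    f.rootMultiplicity x + 3 ≤ f.natDegree := by
  have hcard : f.roots.toFinset.card = 4 :=
    h.roots_toFinset ▸ card_eq_four_of_mem_Ioo h.z_mem_Ioo h.b_mem_Ioo h.b_ne_z
  have := rootMultiplicity_add_card_le h.ne_zero hx
  lia

lemma eq_of_isRoot_iterate_derivative (h : HasExactlyFourRoots f a z b d) (hf : f.Splits) {m : ℕ}
    (hdeg : f.natDegree = m + 4) (hb₂ : (derivative^[m + 2] f).IsRoot b) (hx : f.IsRoot x)
    (hx₃ : (derivative^[m + 1] f).IsRoot x) : x = z := by
  have hmult := h.rootMultiplicity_add_three_le hx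
  have hxad := mem_Ioo_of_isRoot_iterate_derivative hf h.isLeast h.isGreatest (by lia) hx₃ (by lia)
  rcases h.isRoot_iff.1 hx with rfl | rfl | rfl | rfl
  · exact absurd hxad.1 (lt_irrefl _)
  · rfl
  · have := add_one_lt_rootMultiplicity_of_isRoot_iterate_derivative hf (by lia) hx₃ hb₂
    lia
  · exact absurd hxad.2 (lt_irrefl _)

lemma not_isRoot_of_isRoot_iterate_derivative (h : HasExactlyFourRoots f a z b d) (hf : f.Splits)
    {m : ℕ} (hdeg : f.natDegree = m + 5) (hz₁ : (derivative^[m + 4] f).IsRoot z)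
    (hb₂ : (derivative^[m + 3] f).IsRoot b) (hz₃ : (derivative^[m + 2] f).IsRoot z)
    (hx₄ : (derivative^[m + 1] f).IsRoot x) : ¬ f.IsRoot x := by
  intro hx
  have ha : f.IsRoot a := h.isLeast.1
  have hd : f.IsRoot d := h.isGreatest.1
  have hz : f.IsRoot z := h.isRoot_iff.2 (by simp)
  have hb : f.IsRoot b := h.isRoot_iff.2 (by simp)
  have haz := h.z_mem_Ioo.1.ne
  have hab := h.b_mem_Ioo.1.ne
  have hzd := h.z_mem_Ioo.2.ne
  have hbd := h.b_mem_Ioo.2.ne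
  have had := (h.z_mem_Ioo.1.trans h.z_mem_Ioo.2).ne
  rcases h.isRoot_iff.1 hx with rfl | rfl | rfl | rfl
  · have hmult := lt_rootMultiplicity_of_isRoot_iterate_derivative_of_mem_bounds hf
      (.inl h.isLeast.2) (by lia) hx₄
    exact hbd (eq_of_le_rootMultiplicity_of_isRoot_iterate_derivative hf hdeg hmult hz hb hd haz hab
      had h.b_ne_z.symm hzd hz₁ hz₃)
  · have := add_one_lt_rootMultiplicity_of_isRoot_iterate_derivative hf (by lia) hx₄ hz₃
    have := h.rootMultiplicity_add_three_le hx
    lia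
  · exact h.b_ne_z
      (eq_of_isRoot_alternating_iterate_derivative hf hdeg hz hb hz₁ hb₂ hz₃ hx₄)
  · have hmult := lt_rootMultiplicity_of_isRoot_iterate_derivative_of_mem_bounds hf
      (.inr h.isGreatest.2) (by lia) hx₄
    exact hab (eq_of_le_rootMultiplicity_of_isRoot_iterate_derivative hf hdeg hmult hz ha hb
      hzd.symm had.symm hbd.symm haz.symm h.b_ne_z.symm hz₁ hz₃)

end HasExactlyFourRoots

end Real

theorem stmt6_general {f : ℝ[X]} (hf : f.Splits) (hn : 2 ≤ f.natDegree)
    (hCA : ∀ j, 1 ≤ j → j < f.natDegree → f.natDegree ≤ j + 4 →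
      ∃ z, f.IsRoot z ∧ (derivative^[j] f).IsRoot z)
    (hnt : ∀ a b, f ≠ C a * (X - C b) ^ f.natDegree) : 5 ≤ f.roots.toFinset.card := by
  by_contra! hcard
  obtain ⟨m, hm⟩ : ∃ m, f.natDegree = m + 2 := ⟨_, (Nat.sub_add_cancel hn).symm⟩
  obtain ⟨z, hz, hz₁⟩ := hCA (m + 1) (by lia) (by lia) (by lia)
  obtain ⟨b, hb, hb₂⟩ : ∃ b, f.IsRoot b ∧ (derivative^[m] f).IsRoot b := by
    rcases m.eq_zero_or_pos with rfl | hpos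
    · exact ⟨z, hz, hz⟩
    · exact hCA m hpos (by lia) (by lia)
  obtain ⟨a, d, h⟩ := exists_hasExactlyFourRoots hf (rootMultiplicity_lt_natDegree hnt) (by lia) hm
    hz hz₁ hb hb₂
  have hmult := h.rootMultiplicity_add_three_le hz
  have hpos := (rootMultiplicity_pos h.ne_zero).2 hz
  obtain ⟨m, rfl⟩ : ∃ k, m = k + 2 := ⟨m - 2, by lia⟩
  obtain ⟨w, hw, hz₃⟩ := hCA (m + 1) (by lia) (by lia) (by lia)
  obtain rfl : w = z := h.eq_of_isRoot_iterate_derivative hf hm hb₂ hw hz₃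
  rcases m with _ | m
  · have := add_one_lt_rootMultiplicity_of_isRoot_iterate_derivative (j := 0) hf (by lia) hw hz₃
    lia
  · obtain ⟨y, hy, hy₄⟩ := hCA (m + 1) (by lia) (by lia) (by lia)
    exact h.not_isRoot_of_isRoot_iterate_derivative hf hm hz₁ hb₂ hz₃ hy₄ hy

theorem stmt6 (n : ℕ) (hn : 2 ≤ n) (f : Polynomial ℝ) (hdeg : f.natDegree = n)
    (hreal : ∀ z : ℂ, Polynomial.aeval z f = 0 → z.im = 0)
    (hCA : ∀ j : ℕ, 1 ≤ j → j ≤ n - 1 →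
      ∃ z : ℝ, f.eval z = 0 ∧ (Polynomial.derivative^[j] f).eval z = 0)
    (hnt : ¬ ∃ a b : ℝ, f = Polynomial.C a * (Polynomial.X - Polynomial.C b) ^ n) :
    5 ≤ f.roots.toFinset.card := by
  subst hdeg
  exact stmt6_general (splits_of_forall_aeval_eq_zero_im_eq_zero hreal) hn
    (fun j hj hjn _ ↦ hCA j hj (Nat.le_sub_one_of_lt hjn))
    fun a b h ↦ hnt ⟨a, b, h⟩
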